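/- Let h = (h_{ijk}) be a fully symmetric real 3-tensor with indices in {1, …, 2n}. Then the quadratic form Q̃(h) = Σ_{i,j,k} h_{ijk}² − 2 Σ_k Σ_{i odd} (h_{iik} h_{i'i'k} − h_{ii'k}²) + 4 Σ_k Σ_{i odd < j odd} (h_{i'jk} h_{j'ik} − h_{ijk} h_{j'i'k}) decomposes as Q̃(h) = Q̃₁(h) + Q̃₂(h) + Q̃₃(h), where Q̃₁ is the sum over odd i of h_{iii}² + h_{i'i'i'}² + 5(h_{ii'i'}² + h_{i'ii}²) − 2h_{iii}h_{i'i'i} − 2h_{iii'}h_{i'i'i'}; Q̃₂ is the sum over i odd < j odd of 3(h_{ijj}² + h_{ij'j'}² + h_{i'jj}² + h_{i'j'j'}² + h_{jii}² + h_{j'ii}² + h_{ji'i'}² + h_{j'i'i'}²) + 8(h_{ii'j}² + h_{ii'j'}² + h_{ijj'}² + h_{i'jj'}²) − 2(h_{iij}h_{i'i'j} + h_{iij'}h_{i'i'j'}) − 2(h_{jji}h_{j'j'i} + h_{jji'}h_{j'j'i'}) + 4(h_{i'ji}h_{j'ii} − h_{iji}h_{j'i'i}) + 4(h_{i'ji'}h_{j'ii'}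 − h_{iji'}h_{j'i'i'}) + 4(h_{i'jj}h_{j'ij} − h_{ijj}h_{j'i'j}) + 4(h_{i'jj'}h_{j'ij'} − h_{ijj'}h_{j'i'j'}); and Q̃₃ is the sum over i odd < j odd < k odd of 6(h_{ijk}² + h_{ijk'}² + h_{ij'k}² + h_{ij'k'}² + h_{i'jk}² + h_{i'jk'}² + h_{i'j'k}² + h_{i'j'k'}²) + 4(h_{j'ki}h_{k'ji} − h_{jki}h_{k'j'i} + h_{j'ki'}h_{k'ji'} − h_{jki'}h_{k'j'i'}) + 4(h_{i'kj}h_{k'ij} − h_{ikj}h_{k'i'j} + h_{i'kj'}h_{k'ij'} − h_{ikj'}h_{k'i'j'}) + 4(h_{i'jk}h_{j'ik} − h_{ijk}h_{j'i'k} + h_{i'jk'}h_{j'ik'} − h_{ijk'}h_{j'i'k'}). -/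

import Mathlib

/-!
The indices are grouped into blocks `{i, i'}`, each represented by its even element `i` (odd in
1-based numbering), so that a sum over all indices is a sum over representatives of
`f i + f i'` (`sum_univ_eq_sum_even`). Each of the three parts of `Q̃` then is a sum over tuples of
representatives, and such a sum splits according to the relative order of the representatives:
all equal, exactly two distinct, or all distinct (`sum_pair_split`, `sum_lt_split`,
`sum_triple_split`). After relabelling, these three contributions are sums over `i`, over `i < j`
and over `i < j < k`; by the symmetry of `h` their summands agree with those of `Q̃₁`, `Q̃₂`
and `Q̃₃`.
-/

open Finset

/-- The involution `i ↦ i'` on `Fin (2n)` (0-indexed: `i' = i+1` for even `i`,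
`i' = i−1` for odd `i`). -/
def pr (n : ℕ) (i : Fin (2 * n)) : Fin (2 * n) :=
  if _h : (i : ℕ) % 2 = 0 then ⟨(i : ℕ) + 1, by have := i.isLt; omega⟩
  else ⟨(i : ℕ) - 1, by have := i.isLt; omega⟩

/-- The quadratic form `Q̃(h)` (the form `Q(λ, h)` at `λ = (1, …, 1)`). -/
def Qt (n : ℕ) (h : Fin (2 * n) → Fin (2 * n) → Fin (2 * n) → ℝ) : ℝ :=
  (∑ i, ∑ j, ∑ k, h i j k ^ 2)
    - 2 * (∑ k, ∑ i ∈ univ.filter (fun i : Fin (2 * n) => (i : ℕ) % 2 = 0),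
        (h i i k * h (pr n i) (pr n i) k - h i (pr n i) k ^ 2))
    + 4 * (∑ k, ∑ i ∈ univ.filter (fun i : Fin (2 * n) => (i : ℕ) % 2 = 0),
        ∑ j ∈ univ.filter (fun j : Fin (2 * n) => (j : ℕ) % 2 = 0 ∧ i < j),
        (h (pr n i) j k * h (pr n j) i k - h i j k * h (pr n j) (pr n i) k))

/-- The summand of `Q̃₁` associated to the odd index `i`. -/
def Qt1 (n : ℕ) (h : Fin (2 * n) → Fin (2 * n) → Fin (2 * n) → ℝ) : ℝ :=
  ∑ i ∈ univ.filter (fun i : Fin (2 * n) => (i : ℕ) % 2 = 0),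
    (h i i i ^ 2 + h (pr n i) (pr n i) (pr n i) ^ 2
      + 5 * (h i (pr n i) (pr n i) ^ 2 + h (pr n i) i i ^ 2)
      - 2 * h i i i * h (pr n i) (pr n i) i
      - 2 * h i i (pr n i) * h (pr n i) (pr n i) (pr n i))

/-- `Q̃₂(h)`: sum over pairs `i odd < j odd`. -/
def Qt2 (n : ℕ) (h : Fin (2 * n) → Fin (2 * n) → Fin (2 * n) → ℝ) : ℝ :=
  ∑ i ∈ univ.filter (fun i : Fin (2 * n) => (i : ℕ) % 2 = 0),
    ∑ j ∈ univ.filter (fun j : Fin (2 * n) => (j : ℕ) % 2 = 0 ∧ i < j),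
      (let i' := pr n i
       let j' := pr n j
       3 * (h i j j ^ 2 + h i j' j' ^ 2 + h i' j j ^ 2 + h i' j' j' ^ 2
          + h j i i ^ 2 + h j' i i ^ 2 + h j i' i' ^ 2 + h j' i' i' ^ 2)
        + 8 * (h i i' j ^ 2 + h i i' j' ^ 2 + h i j j' ^ 2 + h i' j j' ^ 2)
        - 2 * (h i i j * h i' i' j + h i i j' * h i' i' j')
        - 2 * (h j j i * h j' j' i + h j j i' * h j' j' i')
        + 4 * (h i' j i * h j' i i - h i j i * h j' i' i)
        + 4 * (h i' j i' * h j' i i' - h i j i' * h j' i' i')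
        + 4 * (h i' j j * h j' i j - h i j j * h j' i' j)
        + 4 * (h i' j j' * h j' i j' - h i j j' * h j' i' j'))

/-- `Q̃₃(h)`: sum over triples `i odd < j odd < k odd`. -/
def Qt3 (n : ℕ) (h : Fin (2 * n) → Fin (2 * n) → Fin (2 * n) → ℝ) : ℝ :=
  ∑ i ∈ univ.filter (fun i : Fin (2 * n) => (i : ℕ) % 2 = 0),
    ∑ j ∈ univ.filter (fun j : Fin (2 * n) => (j : ℕ) % 2 = 0 ∧ i < j),
      ∑ k ∈ univ.filter (fun k : Fin (2 * n) => (k : ℕ) % 2 = 0 ∧ j < k),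
        (let i' := pr n i
         let j' := pr n j
         let k' := pr n k
         6 * (h i j k ^ 2 + h i j k' ^ 2 + h i j' k ^ 2 + h i j' k' ^ 2
            + h i' j k ^ 2 + h i' j k' ^ 2 + h i' j' k ^ 2 + h i' j' k' ^ 2)
          + 4 * (h j' k i * h k' j i - h j k i * h k' j' i
            + h j' k i' * h k' j i' - h j k i' * h k' j' i')
          + 4 * (h i' k j * h k' i j - h i k j * h k' i' j
            + h i' k j' * h k' i j' - h i k j' * h k' i' j')
          + 4 * (h i' j k * h j' i k - h i j k * h j' i' k
            + h i' j k' * h j' i k' - h i j k' * h j' i' k'))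

lemma sum_univ_eq_sum_even (n : ℕ) (f : Fin (2 * n) → ℝ) :
    ∑ i, f i = ∑ i ∈ univ.filter (fun i : Fin (2 * n) => (i : ℕ) % 2 = 0),
      (f i + f (pr n i)) := by
  rw [← Finset.sum_filter_add_sum_filter_not univ (fun i : Fin (2 * n) => (i : ℕ) % 2 = 0),
    Finset.sum_add_distrib]
  congr 1
  refine Finset.sum_nbij' (pr n) (pr n) ?_ ?_ ?_ ?_ ?_
  · intro a ha
    simp only [mem_filter, mem_univ, true_and] at ha ⊢
    simp only [pr, dif_neg ha]
    omega
  · intro a ha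
    simp only [mem_filter, mem_univ, true_and] at ha ⊢
    simp only [pr, dif_pos ha]
    omega
  · intro a ha
    simp only [mem_filter, mem_univ, true_and] at ha
    have hb : ((a : ℕ) - 1) % 2 = 0 := by omega
    ext
    simp only [pr, dif_neg ha, dif_pos hb]
    omega
  · intro a ha
    simp only [mem_filter, mem_univ, true_and] at ha
    have hb : ¬ ((a : ℕ) + 1) % 2 = 0 := by omega
    ext
    simp only [pr, dif_pos ha, dif_neg hb]
    omega
  · intro a ha
    simp only [mem_filter, mem_univ, true_and] at ha
    have hb : ((a : ℕ) - 1) % 2 = 0 := by omega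
    congr 1
    ext
    simp only [pr, dif_neg ha, dif_pos hb]
    omega

section Split

variable {α : Type*} [LinearOrder α] (E : Finset α)

lemma sum_pair_split (F : α → α → ℝ) :
    ∑ i ∈ E, ∑ j ∈ E, F i j
      = ∑ i ∈ E, F i i + ∑ i ∈ E, ∑ j ∈ E with i < j, (F i j + F j i) := by
  have h1 : ∀ i ∈ E, ∑ j ∈ E, F i j = F i i + ∑ j ∈ E, (if i < j then F i j else 0)
      + ∑ j ∈ E, (if j < i then F i j else 0) := by
    intro i hi
    have : F i i = ∑ j ∈ E, if i = j then F i j else 0 := by simp [hi]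
    rw [this, ← sum_add_distrib, ← sum_add_distrib]
    refine sum_congr rfl fun j _ => ?_
    rcases lt_trichotomy i j with h | h | h
    · simp [h, h.ne, h.not_gt]
    · simp [h]
    · simp [h, h.ne', h.not_gt]
  rw [sum_congr rfl h1, sum_add_distrib, sum_add_distrib,
    sum_comm (f := fun i j => if j < i then F i j else 0)]
  simp only [sum_filter, sum_add_distrib]
  ring

/-- For a pair `i < j` and a free index `k`, the index `k` equals `i`, equals `j`, or lies in one
of the three gaps; in the last case the triple is relabelled increasingly. -/
lemma sum_lt_split (G : α → α → α → ℝ) :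
    ∑ k ∈ E, ∑ i ∈ E, ∑ j ∈ E with i < j, G i j k
      = ∑ i ∈ E, ∑ j ∈ E with i < j, (G i j i + G i j j)
        + ∑ i ∈ E, ∑ j ∈ E with i < j, ∑ k ∈ E with j < k, (G i j k + G i k j + G j k i) := by
  have h1 : ∀ i ∈ E, ∀ j ∈ E, (∑ k ∈ E, if i < j then G i j k else 0)
      = (if i < j then G i j i + G i j j else 0)
        + ∑ k ∈ E, (if i < j ∧ j < k then G i j k else 0)
        + ∑ k ∈ E, (if i < k ∧ k < j then G i j k else 0)
        + ∑ k ∈ E, (if k < i ∧ i < j then G i j k else 0) := by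
    intro i hi j hj
    have : (if i < j then G i j i + G i j j else 0)
        = (∑ k ∈ E, if i = k then (if i < j then G i j k else 0) else 0)
          + ∑ k ∈ E, if j = k then (if i < j then G i j k else 0) else 0 := by
      simp [hi, hj, ite_add_zero]
    rw [this, ← sum_add_distrib, ← sum_add_distrib, ← sum_add_distrib, ← sum_add_distrib]
    refine sum_congr rfl fun k _ => ?_
    by_cases hij : i < j
    · rcases lt_trichotomy i k with h | h | h
      · rcases lt_trichotomy j k with h' | h' | h'
        · simp [hij, h, h.ne, h.not_gt, h', h'.ne, h'.not_gt]
        · subst h'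
          simp [hij, hij.ne, hij.not_gt]
        · simp [hij, h, h.ne, h.not_gt, h', h'.ne', h'.not_gt]
      · subst h
        simp [hij, hij.ne', hij.not_gt]
      · have h' := h.trans hij
        simp [hij, h, h.ne', h.not_gt, h'.ne', h'.not_gt]
    · have : ¬ (i < k ∧ k < j) := fun h => hij (h.1.trans h.2)
      simp [hij, this]
  have h2 : ∑ k ∈ E, ∑ i ∈ E, ∑ j ∈ E with i < j, G i j k
      = ∑ i ∈ E, ∑ j ∈ E, ∑ k ∈ E, if i < j then G i j k else 0 := by
    simp only [sum_filter]
    rw [sum_comm]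
    exact sum_congr rfl fun i _ => sum_comm
  have h3 : ∑ i ∈ E, ∑ j ∈ E, ∑ k ∈ E, (if i < k ∧ k < j then G i j k else 0)
      = ∑ i ∈ E, ∑ j ∈ E, ∑ k ∈ E, (if i < j ∧ j < k then G i k j else 0) :=
    sum_congr rfl fun i _ => sum_comm
  have h4 : ∑ i ∈ E, ∑ j ∈ E, ∑ k ∈ E, (if k < i ∧ i < j then G i j k else 0)
      = ∑ i ∈ E, ∑ j ∈ E, ∑ k ∈ E, (if i < j ∧ j < k then G j k i else 0) := by
    rw [sum_congr rfl fun i _ => sum_comm, sum_comm]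
  have h5 : ∑ i ∈ E, ∑ j ∈ E with i < j, ∑ k ∈ E with j < k, (G i j k + G i k j + G j k i)
      = ∑ i ∈ E, ∑ j ∈ E, ∑ k ∈ E,
        ((if i < j ∧ j < k then G i j k else 0) + (if i < j ∧ j < k then G i k j else 0)
          + (if i < j ∧ j < k then G j k i else 0)) := by
    simp only [sum_filter]
    refine sum_congr rfl fun i _ => sum_congr rfl fun j _ => ?_
    by_cases hij : i < j <;> simp [hij, ite_add_zero]
  rw [h2, sum_congr rfl fun i hi => sum_congr rfl fun j hj => h1 i hi j hj, h5]
  simp only [sum_add_distrib, sum_filter, h3, h4, ite_add_zero]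
  ring

lemma sum_triple_split (A : α → α → α → ℝ) :
    ∑ k ∈ E, ∑ i ∈ E, ∑ j ∈ E, A i j k
      = ∑ i ∈ E, A i i i
        + ∑ i ∈ E, ∑ j ∈ E with i < j, ((A j j i + A i i j)
          + ((A i j i + A j i i) + (A i j j + A j i j)))
        + ∑ i ∈ E, ∑ j ∈ E with i < j, ∑ k ∈ E with j < k,
          ((A i j k + A j i k) + (A i k j + A k i j) + (A j k i + A k j i)) := by
  rw [sum_congr rfl fun k _ => sum_pair_split E (fun i j => A i j k), sum_add_distrib,
    sum_pair_split E (fun k i => A i i k), sum_lt_split E (fun i j k => A i j k + A j i k)]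
  simp only [sum_add_distrib]
  ring

end Split

/-- For a fully symmetric real 3-tensor `h`, the quadratic form `Q̃`
decomposes as `Q̃(h) = Q̃₁(h) + Q̃₂(h) + Q̃₃(h)`.
("odd" refers to the paper's 1-based indexing, i.e. `(i : ℕ) % 2 = 0` here.) -/
theorem Qt_decomposition (n : ℕ)
    (h : Fin (2 * n) → Fin (2 * n) → Fin (2 * n) → ℝ)
    (hsym1 : ∀ i j k, h i j k = h j i k)
    (hsym2 : ∀ i j k, h i j k = h i k j) :
    Qt n h = Qt1 n h + Qt2 n h + Qt3 n h := by
  have hcycle : ∑ i, ∑ j, ∑ k, h i j k ^ 2 = ∑ k, ∑ i, ∑ j, h i j k ^ 2 := by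
    rw [sum_comm]
    exact sum_congr rfl fun i _ => sum_congr rfl fun j _ => sum_congr rfl fun k _ => by
      rw [hsym1, hsym2, hsym1, hsym2, hsym1]
  unfold Qt Qt1 Qt2 Qt3
  rw [hcycle]
  simp only [sum_univ_eq_sum_even, ← filter_filter]
  set E := univ.filter (fun i : Fin (2 * n) => (i : ℕ) % 2 = 0)
  conv_lhs => simp only [← sum_add_distrib]
  rw [sum_triple_split E (fun i j k =>
      h i j k ^ 2 + h i (pr n j) k ^ 2 + (h (pr n i) j k ^ 2 + h (pr n i) (pr n j) k ^ 2)
      + (h i j (pr n k) ^ 2 + h i (pr n j) (pr n k) ^ 2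
        + (h (pr n i) j (pr n k) ^ 2 + h (pr n i) (pr n j) (pr n k) ^ 2))),
    sum_pair_split E (fun k i =>
      h i i k * h (pr n i) (pr n i) k - h i (pr n i) k ^ 2
      + (h i i (pr n k) * h (pr n i) (pr n i) (pr n k) - h i (pr n i) (pr n k) ^ 2)),
    sum_lt_split E (fun i j k =>
      h (pr n i) j k * h (pr n j) i k - h i j k * h (pr n j) (pr n i) k
      + (h (pr n i) j (pr n k) * h (pr n j) i (pr n k)
        - h i j (pr n k) * h (pr n j) (pr n i) (pr n k)))]
  -- Collect the contributions of one, two and three blocks.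
  have regroup : ∀ a b c d e f g a' b' c' : ℝ, a - 2 * d = a' → b - 2 * e + 4 * f = b' →
      c + 4 * g = c' → a + b + c - 2 * (d + e) + 4 * (f + g) = a' + b' + c' := by
    intros
    linarith
  apply regroup
  · simp only [mul_sum, ← sum_sub_distrib]
    refine sum_congr rfl fun i _ => ?_
    -- Ordered rewriting with `hsym1` and `hsym2` sorts the three arguments of every `h`.
    generalize pr n i = i'
    simp only [hsym1, hsym2]
    ring
  · simp only [mul_sum, ← sum_sub_distrib, ← sum_add_distrib]
    refine sum_congr rfl fun i _ => sum_congr rfl fun j _ => ?_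
    generalize pr n i = i'
    generalize pr n j = j'
    simp only [hsym1, hsym2]
    ring
  · simp only [mul_sum, ← sum_add_distrib]
    refine sum_congr rfl fun i _ => sum_congr rfl fun j _ => sum_congr rfl fun k _ => ?_
    generalize pr n i = i'
    generalize pr n j = j'
    generalize pr n k = k'
    simp only [hsym1, hsym2]
    ring
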